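/- arXiv:2004.00189 — 2 statements merged into one kernel-verified Lean document; each statement's English description precedes it below -/
import Mathlib

section
/- Let k be a perfect field of characteristic p > 0, and let A and B be domains that are strongly F-regular k-algebras of finite type. If the tensor product A ⊗_k B is a domain, then A ⊗_k B is strongly F-regular. -/
/-- A commutative ring `R` of characteristic `p` is strongly `F`-regular (Hochster–Huneke) if
for every `c` not in any minimal prime there are `e ∈ ℕ` and an additive map `φ : R → R` that
is `R`-linear for the `e`-th Frobenius twist (i.e. `φ(r^{p^e} x) = r φ(x)`, an `R`-linear map
`F^e_* R → R`) with `φ(c) = 1`. -/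
def StronglyFRegular (p : ℕ) (R : Type*) [CommRing R] : Prop :=
  ∀ c : R, (∀ P ∈ minimalPrimes R, c ∉ P) →
    ∃ (e : ℕ) (φ : R →+ R), (∀ r x : R, φ (r ^ p ^ e * x) = r * φ x) ∧ φ c = 1

open scoped TensorProduct

/-- Over a domain, a finite module has a finite dual basis up to a nonzero scalar. -/
theorem sfr_dual_module (A M : Type*) [CommRing A] [IsDomain A] [AddCommGroup M] [Module A M]
    [Module.Finite A M] :
    ∃ (ι : Type) (_ : Fintype ι) (u : ι → M) (π : ι → M →ₗ[A] A) (r : A), r ≠ 0 ∧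
      ∀ x, r • x = ∑ i, π i x • u i := by
  classical
  obtain ⟨n, v, hv⟩ := Module.Finite.exists_fin (R := A) (M := M)
  obtain ⟨s, hs, hmax⟩ := exists_maximal_linearIndepOn A v
  have h1 : ∀ i, ∃ a : A, a ≠ 0 ∧ a • v i ∈ Submodule.span A (v '' s) := by
    intro i
    by_cases hi : i ∈ s
    · exact ⟨1, one_ne_zero, by
        rw [one_smul]; exact Submodule.subset_span ⟨i, hi, rfl⟩⟩
    · exact hmax i hi
  choose a ha hav using h1
  set r := ∏ i, a i with hr
  have hr0 : r ≠ 0 := Finset.prod_ne_zero_iff.mpr fun i _ => ha i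
  have hrx : ∀ x : M, r • x ∈ Submodule.span A (v '' s) := by
    intro x
    have hx : x ∈ Submodule.span A (Set.range v) := by rw [hv]; trivial
    induction hx using Submodule.span_induction with
    | mem x hx =>
      obtain ⟨i, rfl⟩ := hx
      rw [hr, ← Finset.prod_erase_mul _ _ (Finset.mem_univ i), mul_smul]
      exact Submodule.smul_mem _ _ (hav i)
    | zero => simp
    | add x y _ _ hx hy => rw [smul_add]; exact Submodule.add_mem _ hx hy
    | smul c x _ hx => rw [smul_comm]; exact Submodule.smul_mem _ _ hx
  have hli : LinearIndependent A (fun i : s => v i) := hs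
  have him : Set.range (fun i : s => v i) = v '' s := by
    ext; simp
  rw [← him] at hrx
  let b := Module.Basis.span hli
  let g : M →ₗ[A] Submodule.span A (Set.range (fun i : s => v i)) :=
    LinearMap.codRestrict _ (LinearMap.lsmul A M r) hrx
  refine ⟨s, inferInstance, fun i => v i, fun i => (b.coord i).comp g, r, hr0, ?_⟩
  intro x
  have := congrArg Subtype.val (b.sum_repr (g x))
  simp only [Submodule.coe_sum, Submodule.coe_smul] at this
  have hb : ∀ i : s, ((b i : Submodule.span A (Set.range (fun i : s => v i))) : M) = v i := fun i => by
    simp [b, Module.Basis.span_apply]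
  simp only [hb] at this
  exact this.symm

theorem sfr_dual_hom {A A' : Type*} [CommRing A] [IsDomain A] [CommRing A'] (f : A →+* A')
    (hf : f.Finite) :
    ∃ (ι : Type) (_ : Fintype ι) (u : ι → A') (π : ι → A' →+ A) (r : A), r ≠ 0 ∧
      (∀ i s x, π i (f s * x) = s * π i x) ∧ ∀ x, f r * x = ∑ i, f (π i x) * u i := by
  letI := f.toAlgebra
  haveI : Module.Finite A A' := hf
  obtain ⟨ι, _, u, π, r, hr, h⟩ := sfr_dual_module A A'
  refine ⟨ι, inferInstance, u, fun i => (π i).toAddMonoidHom, r, hr, ?_, ?_⟩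
  · intro i s x
    exact (π i).map_smul s x
  · exact h

theorem sfr_frob_finite (p : ℕ) [Fact p.Prime]
    (k : Type*) [Field k] [CharP k p] [PerfectRing k p]
    (A : Type*) [CommRing A] [CharP A p]
    [Algebra k A] [Algebra.FiniteType k A] (e : ℕ) : (iterateFrobenius A p e).Finite := by
  apply RingHom.IsIntegral.to_finite
  · intro x
    refine ⟨Polynomial.X ^ p ^ e - Polynomial.C x, ?_, ?_⟩
    · exact Polynomial.monic_X_pow_sub_C x (pow_ne_zero _ (Fact.out : p.Prime).ne_zero)
    · simp [iterateFrobenius_def]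
  · apply RingHom.FiniteType.of_comp_finiteType (f := algebraMap k A)
    rw [← RingHom.iterateFrobenius_comm]
    apply RingHom.FiniteType.comp
    · rw [RingHom.finiteType_algebraMap]; infer_instance
    · exact RingHom.FiniteType.of_surjective _ (bijective_iterateFrobenius k p e).2

/-- `φ` is an `R`-linear map `F^e_* R → R`. -/
def SfrLevel (p e : ℕ) {R : Type*} [CommRing R] (φ : R →+ R) : Prop :=
  ∀ r x : R, φ (r ^ p ^ e * x) = r * φ x

theorem SfrLevel.comp {p e e' : ℕ} {R : Type*} [CommRing R] {φ ψ : R →+ R}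
    (hφ : SfrLevel p e φ) (hψ : SfrLevel p e' ψ) : SfrLevel p (e + e') (φ.comp ψ) := by
  intro r x
  simp only [AddMonoidHom.comp_apply]
  rw [pow_add, pow_mul, hψ, hφ]

theorem SfrLevel.mulRight {p e : ℕ} {R : Type*} [CommRing R] {φ : R →+ R}
    (hφ : SfrLevel p e φ) (a : R) : SfrLevel p e (φ.comp (AddMonoidHom.mulLeft a)) := by
  intro r x
  simp only [AddMonoidHom.comp_apply, AddMonoidHom.coe_mulLeft]
  rw [mul_left_comm, hφ]

theorem SfrLevel.mulLeft {p e : ℕ} {R : Type*} [CommRing R] {φ : R →+ R}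
    (hφ : SfrLevel p e φ) (a : R) : SfrLevel p e ((AddMonoidHom.mulLeft a).comp φ) := by
  intro r x
  simp only [AddMonoidHom.comp_apply, AddMonoidHom.coe_mulLeft]
  rw [hφ, mul_left_comm]

theorem SfrLevel.add {p e : ℕ} {R : Type*} [CommRing R] {φ ψ : R →+ R}
    (hφ : SfrLevel p e φ) (hψ : SfrLevel p e ψ) : SfrLevel p e (φ + ψ) := by
  intro r x
  simp only [AddMonoidHom.add_apply]
  rw [hφ, hψ, mul_add]

/-- Dual basis up to a scalar for the iterated Frobenius. -/
theorem sfr_dual (p : ℕ) [Fact p.Prime]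
    (k : Type*) [Field k] [CharP k p] [PerfectRing k p]
    (A : Type*) [CommRing A] [IsDomain A] [CharP A p]
    [Algebra k A] [Algebra.FiniteType k A] (e : ℕ) :
    ∃ (ι : Type) (_ : Fintype ι) (u : ι → A) (π : ι → A →+ A) (r : A), r ≠ 0 ∧
      (∀ i, SfrLevel p e (π i)) ∧ ∀ x, r ^ p ^ e * x = ∑ i, (π i x) ^ p ^ e * u i :=
  sfr_dual_hom (iterateFrobenius A p e) (sfr_frob_finite p k A e)

theorem sfr_level_ne_zero (p : ℕ) [Fact p.Prime]
    (k : Type*) [Field k] [CharP k p] [PerfectRing k p]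
    (A : Type*) [CommRing A] [IsDomain A] [CharP A p]
    [Algebra k A] [Algebra.FiniteType k A] (e : ℕ) (a : A) (ha : a ≠ 0) :
    ∃ φ : A →+ A, SfrLevel p e φ ∧ φ a ≠ 0 := by
  obtain ⟨ι, _, u, π, r, hr, hπ, h⟩ := sfr_dual p k A e
  by_contra! hcon
  have := h a
  rw [Finset.sum_eq_zero (fun i _ => by
    rw [hcon _ (hπ i), zero_pow (pow_ne_zero _ (Fact.out : p.Prime).ne_zero), zero_mul])] at this
  exact mul_ne_zero (pow_ne_zero _ hr) ha this

theorem sfr_pos_level (p : ℕ) [Fact p.Prime]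
    (k : Type*) [Field k] [CharP k p] [PerfectRing k p]
    (A : Type*) [CommRing A] [IsDomain A] [CharP A p]
    [Algebra k A] [Algebra.FiniteType k A] (hA : StronglyFRegular p A) (a : A) (ha : a ≠ 0) :
    ∃ e : ℕ, ∀ n : ℕ, ∃ φ : A →+ A, SfrLevel p ((n + 1) * (e + 1)) φ ∧ φ a = 1 := by
  obtain ⟨θ, hθ, hθa⟩ := sfr_level_ne_zero p k A 1 a ha
  obtain ⟨e, ψ, hψ, hψa⟩ := hA (θ a) (by
    rw [IsDomain.minimalPrimes_eq_singleton_bot]; rintro P rfl; simpa using hθa)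
  have h1 : SfrLevel p (e + 1) (ψ.comp θ) := SfrLevel.comp hψ hθ
  refine ⟨e, fun n => ?_⟩
  induction n with
  | zero => exact ⟨_, by simpa using h1, hψa⟩
  | succ n ih =>
    obtain ⟨φ, hφ, hφa⟩ := ih
    refine ⟨(φ.comp (AddMonoidHom.mulLeft a)).comp (ψ.comp θ), ?_, ?_⟩
    · rw [add_mul (n + 1) 1, one_mul]
      exact (hφ.mulRight a).comp h1
    · simp [hψa, hφa]

/-- Tensor product of two level `e` maps. -/
theorem sfr_tensor (p : ℕ) [Fact p.Prime]
    (k : Type*) [Field k] [CharP k p] [PerfectRing k p]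
    (A B : Type*) [CommRing A] [CommRing B]
    [Algebra k A] [Algebra k B] [CharP (A ⊗[k] B) p] (e : ℕ) (φ : A →+ A) (ψ : B →+ B)
    (hφ : SfrLevel p e φ) (hψ : SfrLevel p e ψ) :
    ∃ χ : A ⊗[k] B →+ A ⊗[k] B, SfrLevel p e χ ∧ ∀ a b, χ (a ⊗ₜ b) = φ a ⊗ₜ ψ b := by
  let f : A →+ B →+ A ⊗[k] B :=
    { toFun := fun a =>
        { toFun := fun b => φ a ⊗ₜ ψ b
          map_zero' := by simp
          map_add' := fun x y => by simp [TensorProduct.tmul_add] }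
      map_zero' := by ext; simp
      map_add' := fun x y => by ext; simp [TensorProduct.add_tmul] }
  have hf : ∀ a b, f a b = φ a ⊗ₜ ψ b := fun _ _ => rfl
  let χ : A ⊗[k] B →+ A ⊗[k] B := TensorProduct.liftAddHom f (by
    intro r m n
    obtain ⟨s, rfl⟩ := (bijective_iterateFrobenius k p e).2 r
    rw [hf, hf, iterateFrobenius_def, Algebra.smul_def, Algebra.smul_def, map_pow, map_pow, hφ, hψ,
      ← Algebra.smul_def, ← Algebra.smul_def, TensorProduct.smul_tmul])
  have hχ : ∀ a b, χ (a ⊗ₜ b) = φ a ⊗ₜ ψ b := fun a b => TensorProduct.liftAddHom_tmul _ _ _ _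
  refine ⟨χ, ?_, hχ⟩
  intro r x
  induction r with
  | zero => simp [zero_pow (pow_ne_zero _ (Fact.out : p.Prime).ne_zero)]
  | add r s hr hs => rw [add_pow_char_pow, add_mul, map_add, hr, hs, add_mul]
  | tmul a b =>
    induction x with
    | zero => simp
    | add x y hx hy => rw [mul_add, map_add, hx, hy, map_add, mul_add]
    | tmul c d =>
      rw [Algebra.TensorProduct.tmul_pow, Algebra.TensorProduct.tmul_mul_tmul, hχ, hφ, hψ, hχ,
        Algebra.TensorProduct.tmul_mul_tmul]

/-- The key step: some level `e` map sends `c` to a nonzero pure tensor. -/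
theorem sfr_key (p : ℕ) [Fact p.Prime]
    (k : Type*) [Field k] [CharP k p] [PerfectRing k p]
    (A B : Type*) [CommRing A] [CommRing B] [IsDomain A] [IsDomain B]
    [CharP A p] [CharP B p]
    [Algebra k A] [Algebra k B] [Algebra.FiniteType k A] [Algebra.FiniteType k B]
    [CharP (A ⊗[k] B) p] [IsDomain (A ⊗[k] B)] (c : A ⊗[k] B) (hc : c ≠ 0) :
    ∃ (e : ℕ) (φ : A ⊗[k] B →+ A ⊗[k] B) (a : A) (b : B), SfrLevel p e φ ∧ a ≠ 0 ∧ b ≠ 0 ∧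
      φ c = a ⊗ₜ b := by
  have hp : p ≠ 0 := (Fact.out : p.Prime).ne_zero
  let T : Submonoid (A ⊗[k] B) :=
    { carrier := {t | ∃ (a : A) (b : B), a ≠ 0 ∧ b ≠ 0 ∧ t = a ⊗ₜ b}
      one_mem' := ⟨1, 1, one_ne_zero, one_ne_zero, Algebra.TensorProduct.one_def⟩
      mul_mem' := by
        rintro _ _ ⟨a, b, ha, hb, rfl⟩ ⟨a', b', ha', hb', rfl⟩
        exact ⟨a * a', b * b', mul_ne_zero ha ha', mul_ne_zero hb hb',
          Algebra.TensorProduct.tmul_mul_tmul _ _ _ _⟩ }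
  have hT : ∀ a b, a ≠ 0 → b ≠ 0 → a ⊗ₜ b ∈ T := fun a b ha hb => ⟨a, b, ha, hb, rfl⟩
  -- a level one map sending `1` into `T`
  obtain ⟨θ, hθ, hθ1⟩ : ∃ θ : A ⊗[k] B →+ A ⊗[k] B, SfrLevel p 1 θ ∧ θ 1 ∈ T := by
    obtain ⟨α, hα, hα1⟩ := sfr_level_ne_zero p k A 1 1 one_ne_zero
    obtain ⟨β, hβ, hβ1⟩ := sfr_level_ne_zero p k B 1 1 one_ne_zero
    obtain ⟨χ, hχ, h⟩ := sfr_tensor p k A B 1 α β hα hβ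
    refine ⟨χ, hχ, ?_⟩
    rw [Algebra.TensorProduct.one_def, h]
    exact hT _ _ hα1 hβ1
  let J' : ℕ → (A ⊗[k] B) → Prop := fun e r =>
    ∃ t ∈ T, ∃ φ : A ⊗[k] B →+ A ⊗[k] B, SfrLevel p e φ ∧ φ c = t * r
  have hstep : ∀ e r, J' e r → J' (e + 1) r := by
    rintro e r ⟨t, ht, φ, hφ, h⟩
    refine ⟨t * θ 1, T.mul_mem ht hθ1,
      (θ.comp (AddMonoidHom.mulLeft ((t * r) ^ (p - 1)))).comp φ, ?_, ?_⟩
    · rw [add_comm]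
      exact (hθ.mulRight _).comp hφ
    · have := hθ (t * r) 1
      simp only [AddMonoidHom.comp_apply, AddMonoidHom.coe_mulLeft, h]
      rw [← pow_succ, Nat.sub_add_cancel (Nat.pos_of_ne_zero hp)]
      rw [pow_one, mul_one] at this
      rw [this]; ring
  have hmono : ∀ e d r, J' e r → J' (e + d) r := by
    intro e d r h
    induction d with
    | zero => exact h
    | succ d ih => exact hstep _ _ ih
  let J : Ideal (A ⊗[k] B) :=
    { carrier := {r | ∃ e, J' e r}
      zero_mem' := ⟨0, 1, T.one_mem, 0, fun _ _ => by simp, by simp⟩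
      add_mem' := by
        rintro r s ⟨e, hr⟩ ⟨e', hs⟩
        have hr' := hmono e e' r hr
        have hs' := hmono e' e s hs
        rw [add_comm] at hs'
        obtain ⟨t, ht, φ, hφ, h⟩ := hr'
        obtain ⟨t', ht', φ', hφ', h'⟩ := hs'
        refine ⟨e + e', t * t', T.mul_mem ht ht',
          (AddMonoidHom.mulLeft t').comp φ + (AddMonoidHom.mulLeft t).comp φ',
          (hφ.mulLeft _).add (hφ'.mulLeft _), ?_⟩
        simp only [AddMonoidHom.add_apply, AddMonoidHom.comp_apply, AddMonoidHom.coe_mulLeft, h, h']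
        ring
      smul_mem' := by
        rintro s r ⟨e, t, ht, φ, hφ, h⟩
        refine ⟨e, t, ht, (AddMonoidHom.mulLeft s).comp φ, hφ.mulLeft _, ?_⟩
        simp only [AddMonoidHom.comp_apply, AddMonoidHom.coe_mulLeft, h, smul_eq_mul]
        ring }
  by_cases hdis : Disjoint (J : Set (A ⊗[k] B)) T
  · exfalso
    obtain ⟨P, hP, hJP, hPT⟩ := Ideal.exists_le_prime_disjoint J T hdis
    have hφP : ∀ e φ, SfrLevel p e φ → φ c ∈ P := fun e φ hφ =>
      hJP ⟨e, 1, T.one_mem, φ, hφ, by simp⟩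
    -- for each `e`, some element of `T` multiplies `c` into `P ^ (p ^ e)`
    have hmem : ∀ e : ℕ, ∃ t ∈ T, t * c ∈ P ^ (p ^ e) := by
      intro e
      obtain ⟨ι, _, u, π, r, hr, hπ, h⟩ := sfr_dual p k A e
      obtain ⟨κ, _, v, ρ, s, hs, hρ, h'⟩ := sfr_dual p k B e
      choose χ hχ hχt using fun (i : ι) (j : κ) =>
        sfr_tensor p k A B e (π i) (ρ j) (hπ i) (hρ j)
      have key : ∀ x : A ⊗[k] B, ((r ^ p ^ e) ⊗ₜ (s ^ p ^ e)) * x =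
          ∑ i, ∑ j, (χ i j x) ^ p ^ e * (u i ⊗ₜ v j) := by
        intro x
        induction x with
        | zero => simp [zero_pow (pow_ne_zero e hp)]
        | add x y hx hy =>
          rw [mul_add, hx, hy]
          simp only [map_add, add_pow_char_pow, add_mul, Finset.sum_add_distrib]
        | tmul a b =>
          rw [Algebra.TensorProduct.tmul_mul_tmul, h, h']
          rw [TensorProduct.sum_tmul]
          refine Finset.sum_congr rfl fun i _ => ?_
          rw [TensorProduct.tmul_sum]
          refine Finset.sum_congr rfl fun j _ => ?_
          rw [hχt, Algebra.TensorProduct.tmul_pow, Algebra.TensorProduct.tmul_mul_tmul]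
      refine ⟨_, hT _ _ (pow_ne_zero (p ^ e) hr) (pow_ne_zero (p ^ e) hs), ?_⟩
      rw [key]
      refine Ideal.sum_mem _ fun i _ => Ideal.sum_mem _ fun j _ => Ideal.mul_mem_right _ _ ?_
      exact Ideal.pow_mem_pow (hφP e _ (hχ i j)) _
    have hft : Algebra.FiniteType k (A ⊗[k] B) :=
      Algebra.FiniteType.trans (S := A) inferInstance inferInstance
    haveI : IsNoetherianRing (A ⊗[k] B) := Algebra.FiniteType.isNoetherianRing k _
    let L := Localization.AtPrime P
    haveI : IsNoetherianRing L := IsLocalization.isNoetherianRing P.primeCompl L inferInstance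
    have hbot := Ideal.iInf_pow_eq_bot_of_isLocalRing (IsLocalRing.maximalIdeal L)
      Ideal.IsPrime.ne_top'
    have hcL : algebraMap (A ⊗[k] B) L c ∈ ⨅ i : ℕ, IsLocalRing.maximalIdeal L ^ i := by
      rw [Ideal.mem_iInf]
      intro i
      obtain ⟨t, ht, htc⟩ := hmem i
      have h1 : algebraMap (A ⊗[k] B) L (t * c) ∈ IsLocalRing.maximalIdeal L ^ (p ^ i) := by
        rw [← Localization.AtPrime.map_eq_maximalIdeal, ← Ideal.map_pow]
        exact Ideal.mem_map_of_mem _ htc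
      have h2 : IsUnit (algebraMap (A ⊗[k] B) L t) :=
        IsLocalization.map_units L (⟨t, fun h => Set.disjoint_left.mp hPT h ht⟩ : P.primeCompl)
      rw [map_mul, Ideal.unit_mul_mem_iff_mem _ h2] at h1
      exact Ideal.pow_le_pow_right (Nat.lt_pow_self (Fact.out : p.Prime).one_lt).le h1
    rw [hbot, Ideal.mem_bot] at hcL
    exact hc (IsLocalization.injective L P.primeCompl_le_nonZeroDivisors (by rw [hcL, map_zero]))
  · rw [Set.not_disjoint_iff] at hdis
    obtain ⟨r, ⟨e, t, ht, φ, hφ, h⟩, hr⟩ := hdis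
    obtain ⟨a, b, ha, hb, hab⟩ := T.mul_mem ht hr
    exact ⟨e, φ, a, b, hφ, ha, hb, by rw [h, hab]⟩

theorem tensor_product_strongly_F_regular
    (p : ℕ) [Fact p.Prime]
    (k : Type*) [Field k] [CharP k p] [PerfectRing k p]
    (A B : Type*) [CommRing A] [CommRing B] [IsDomain A] [IsDomain B]
    [Algebra k A] [Algebra k B] [Algebra.FiniteType k A] [Algebra.FiniteType k B]
    (hA : StronglyFRegular p A) (hB : StronglyFRegular p B)
    [IsDomain (TensorProduct k A B)] :
    StronglyFRegular p (TensorProduct k A B) := by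
  haveI : CharP A p := charP_of_injective_algebraMap (algebraMap k A).injective p
  haveI : CharP B p := charP_of_injective_algebraMap (algebraMap k B).injective p
  haveI : CharP (TensorProduct k A B) p :=
    charP_of_injective_algebraMap (algebraMap k (TensorProduct k A B)).injective p
  intro c hc
  have hc0 : c ≠ 0 := by
    rintro rfl
    exact hc ⊥ (by rw [IsDomain.minimalPrimes_eq_singleton_bot]; rfl) (Ideal.zero_mem _)
  obtain ⟨e, φ, a, b, hφ, ha, hb, h⟩ := sfr_key p k A B c hc0
  obtain ⟨m, hm⟩ := sfr_pos_level p k A hA a ha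
  obtain ⟨n, hn⟩ := sfr_pos_level p k B hB b hb
  obtain ⟨α, hα, hα1⟩ := hm n
  obtain ⟨β, hβ, hβ1⟩ := hn m
  rw [mul_comm] at hβ
  obtain ⟨χ, hχ, hχt⟩ := sfr_tensor p k A B _ α β hα hβ
  refine ⟨_, χ.comp φ, hχ.comp hφ, ?_⟩
  rw [AddMonoidHom.comp_apply, h, hχt, hα1, hβ1, Algebra.TensorProduct.one_def]
end

section
/- Let k be a perfect field of characteristic p > 0, let R be a domain that is a strongly F-regular k-algebra of finite type, and let E be an F-finite field containing k. If R ⊗_k E is a domain, then R ⊗_k E is strongly F-regular. -/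
/-- A commutative ring `R` of characteristic `p` is `F`-finite if `F_* R` is a finite
`R`-module: there is a finite subset `s ⊆ R` such that every element of `R` is a linear
combination of elements of `s` with coefficients that are `p`-th powers. -/
def FFinite (p : ℕ) (R : Type*) [CommRing R] : Prop :=
  ∃ s : Finset R, ∀ x : R, ∃ c : R → R, x = ∑ y ∈ s, (c y) ^ p * y


namespace SFRaux

open TensorProduct MvPolynomial

/-- `φ` is `p^{-e}`-linear. -/
def PLin (p e : ℕ) {S : Type*} [CommRing S] (φ : S →+ S) : Prop :=
  ∀ r x : S, φ (r ^ p ^ e * x) = r * φ x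

theorem tensor_plin (p e : ℕ) [Fact p.Prime] (k : Type*) [Field k] [CharP k p] [PerfectRing k p]
    (R E : Type*) [CommRing R] [CommRing E] [Algebra k R] [Algebra k E] [Nontrivial (R ⊗[k] E)]
    (u : R →+ R) (θ : E →+ E) (hu : PLin p e u) (hθ : PLin p e θ) :
    ∃ φ : R ⊗[k] E →+ R ⊗[k] E, PLin p e φ ∧ ∀ r x, φ (r ⊗ₜ x) = u r ⊗ₜ θ x := by
  have hchar : CharP (R ⊗[k] E) p := charP_of_injective_algebraMap (algebraMap k _).injective p
  let f : R →+ E →+ R ⊗[k] E :=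
    AddMonoidHom.mk' (fun r => AddMonoidHom.mk' (fun x => u r ⊗ₜ θ x)
      (by intro a b; simp [TensorProduct.tmul_add]))
      (by intro a b; ext x; simp [TensorProduct.add_tmul])
  have hf : ∀ (c : k) (m : R) (n : E), f (c • m) n = f m (c • n) := by
    intro c m n
    obtain ⟨d, rfl⟩ := (bijective_iterateFrobenius k p e).2 c
    simp only [iterateFrobenius_def, f, AddMonoidHom.mk'_apply, Algebra.smul_def, map_pow]
    rw [hu, hθ, ← Algebra.smul_def, ← Algebra.smul_def, TensorProduct.smul_tmul]
  refine ⟨TensorProduct.liftAddHom f hf, ?_, fun r x => rfl⟩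
  intro s t
  induction s using TensorProduct.induction_on with
  | zero => simp [(Fact.out : p.Prime).ne_zero]
  | add a b ha hb => rw [add_pow_char_pow, add_mul, map_add, ha, hb, add_mul]
  | tmul r x =>
    induction t using TensorProduct.induction_on with
    | zero => simp
    | add a b ha hb => rw [mul_add, map_add, ha, hb, map_add, mul_add]
    | tmul r' x' =>
      rw [Algebra.TensorProduct.tmul_pow, Algebra.TensorProduct.tmul_mul_tmul]
      change u _ ⊗ₜ θ _ = _ * (u _ ⊗ₜ θ _)
      rw [hu, hθ, Algebra.TensorProduct.tmul_mul_tmul]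

theorem exists_functional (p e : ℕ) [Fact p.Prime] (F : Type*) [Field F] [CharP F p]
    {J : Type*} [DecidableEq J] (v : J → F)
    (hv : ∀ (T : Finset J) (f : J → F), ∑ j ∈ T, f j ^ p ^ e * v j = 0 → ∀ j ∈ T, f j = 0)
    (j₀ : J) :
    ∃ θ : F →+ F, PLin p e θ ∧ ∀ j, θ (v j) = if j = j₀ then 1 else 0 := by
  let i := iterateFrobenius F p e
  have hLI : LinearIndependent i.fieldRange v := by
    rw [linearIndependent_iff']
    intro T g hg j hj
    have h1 : ∀ j, ∃ y : F, y ^ p ^ e = (g j : F) := by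
      intro j
      obtain ⟨y, hy⟩ := (g j).2
      exact ⟨y, by rw [← hy]; exact (iterateFrobenius_def p e y).symm⟩
    choose f hf using h1
    have := hv T f (by
      rw [← hg]; refine Finset.sum_congr rfl fun j _ => ?_
      rw [hf]; rfl) j hj
    have h2 := hf j
    rw [this, zero_pow (pow_ne_zero _ (Fact.out : p.Prime).ne_zero)] at h2
    exact Subtype.ext h2.symm
  let b := Module.Basis.span hLI
  obtain ⟨g, hg⟩ := LinearMap.exists_extend (b.coord j₀)
  let ie := i.rangeRestrictFieldEquiv
  refine ⟨ie.symm.toAddMonoidHom.comp g.toAddMonoidHom, ?_, ?_⟩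
  · intro r x
    have : r ^ p ^ e * x = ie r • x := by
      change _ = i r * x
      rw [iterateFrobenius_def]
    simp [this]
  · intro j
    have h1 : g (v j) = b.coord j₀ (b j) := by
      rw [← hg]; simp [b, Module.Basis.span_apply]
    simp only [AddMonoidHom.comp_apply, LinearMap.toAddMonoidHom_coe]
    rw [h1]
    simp only [Module.Basis.coord_apply, Module.Basis.repr_self, Finsupp.single_apply]
    split_ifs <;> simp

theorem finite_hom {A B : Type*} [CommRing A] [CommRing B] (f : A →+* B) (hf : f.Finite) :
    ∃ s : Finset B, ∀ x : B, ∃ c : B → A, x = ∑ y ∈ s, f (c y) * y := by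
  classical
  algebraize [f]
  obtain ⟨s, hs⟩ := (inferInstance : Module.Finite A B).1
  refine ⟨s, fun x => ?_⟩
  have hx : x ∈ Submodule.span A (s : Set B) := by
    rw [hs]; exact Submodule.mem_top
  obtain ⟨c, -, hc⟩ := Submodule.mem_span_finset.1 hx
  exact ⟨c, by rw [← hc]; simp only [Algebra.smul_def]; rfl⟩

theorem finite_frob (p e : ℕ) [Fact p.Prime] (k : Type*) [Field k] [CharP k p] [PerfectRing k p]
    (R : Type*) [CommRing R] [CharP R p] [Algebra k R] [Algebra.FiniteType k R] :
    ∃ s : Finset R, ∀ x : R, ∃ c : R → R, x = ∑ y ∈ s, (c y) ^ p ^ e * y := by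
  let i := iterateFrobenius R p e
  have h1 : i.FiniteType := by
    apply RingHom.FiniteType.of_comp_finiteType (f := algebraMap k R)
    have : i.comp (algebraMap k R) = (algebraMap k R).comp (iterateFrobenius k p e) := by
      ext x; simp [i, iterateFrobenius_def]
    rw [this]
    apply RingHom.FiniteType.comp
    · exact (RingHom.finiteType_algebraMap).2 inferInstance
    · exact RingHom.FiniteType.of_surjective _ (bijective_iterateFrobenius k p e).2
  have h2 : i.IsIntegral := by
    intro x
    refine ⟨Polynomial.X ^ p ^ e - Polynomial.C x, ?_, ?_⟩
    · exact Polynomial.monic_X_pow_sub_C x (pow_ne_zero _ (Fact.out : p.Prime).ne_zero)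
    · simp [i, iterateFrobenius_def]
  have h3 := h2.to_finite h1
  obtain ⟨s, hs⟩ := finite_hom i h3
  exact ⟨s, fun x => by simpa only [i, iterateFrobenius_def] using hs x⟩

theorem clear_denoms (p e : ℕ) [Fact p.Prime] (k : Type*) [Field k] [CharP k p] [PerfectRing k p]
    (R : Type*) [CommRing R] [IsDomain R] [CharP R p] [Algebra k R] [Algebra.FiniteType k R]
    (L : Type*) [Field L] [Algebra R L] [IsFractionRing R L]
    (θ : L →+ L) (hθ : PLin p e θ) :
    ∃ c : R, c ≠ 0 ∧ ∃ u : R →+ R, PLin p e u ∧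
      ∀ r, algebraMap R L (u r) = algebraMap R L c * θ (algebraMap R L r) := by
  classical
  obtain ⟨s, hs⟩ := finite_frob p e k R
  obtain ⟨b, hb⟩ := IsLocalization.exist_integer_multiples_of_finset (nonZeroDivisors R)
    (s.image fun y => θ (algebraMap R L y))
  have h1 : ∀ r : R, ∃ t : R, algebraMap R L t = algebraMap R L b * θ (algebraMap R L r) := by
    intro r
    obtain ⟨c, hc⟩ := hs r
    have h2 : ∀ y : R, ∃ t : R, y ∈ s → algebraMap R L t = algebraMap R L b * θ (algebraMap R L y) := by
      intro y
      by_cases hy : y ∈ s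
      · obtain ⟨t, ht⟩ := hb _ (Finset.mem_image_of_mem _ hy)
        exact ⟨t, fun _ => by rw [ht, Algebra.smul_def]⟩
      · exact ⟨0, fun h => absurd h hy⟩
    choose t ht using h2
    refine ⟨∑ y ∈ s, c y * t y, ?_⟩
    conv_rhs => rw [hc]
    simp only [map_sum, map_mul, map_pow, Finset.mul_sum]
    refine Finset.sum_congr rfl fun y hy => ?_
    rw [hθ, ht y hy]; ring
  choose u hu using h1
  have hinj : Function.Injective (algebraMap R L) := IsFractionRing.injective R L
  refine ⟨b, nonZeroDivisors.ne_zero b.2, AddMonoidHom.mk' u ?_, ?_, hu⟩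
  · intro x y
    apply hinj
    simp only [map_add, hu, mul_add]
  · intro r x
    apply hinj
    simp only [AddMonoidHom.mk'_apply, map_mul, hu, map_pow]
    rw [hθ]; ring


theorem poly_indep (p e : ℕ) [Fact p.Prime] (k : Type*) [Field k] [CharP k p] {ι : Type*}
    (T : Finset {m : ι →₀ ℕ // ∀ i, m i < p ^ e})
    (f : {m : ι →₀ ℕ // ∀ i, m i < p ^ e} → MvPolynomial ι k)
    (h : ∑ m ∈ T, f m ^ p ^ e * monomial m.1 1 = 0) : ∀ m ∈ T, f m = 0 := by
  classical
  intro m₀ hm₀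
  ext b
  have h1 := congrArg (coeff (p ^ e • b + m₀.1)) h
  rw [coeff_sum, Finset.sum_eq_single m₀, coeff_mul_monomial, ← map_iterateFrobenius_expand,
    coeff_map, coeff_expand_smul _ (pow_ne_zero _ (Fact.out : p.Prime).ne_zero)] at h1
  · simp only [mul_one, coeff_zero] at h1
    exact (map_eq_zero _).1 h1
  · intro m _ hne
    rw [coeff_mul_monomial']
    split_ifs with hle
    · obtain ⟨i, hi⟩ : ∃ i, m.1 i ≠ m₀.1 i := by
        by_contra! hh
        exact hne (Subtype.ext (Finsupp.ext hh))
      rw [← map_iterateFrobenius_expand, coeff_map, coeff_expand_of_not_dvd (i := i), map_zero,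
        zero_mul]
      intro hd
      have h2 := hle i
      have h3 := m.2 i
      have h4 := m₀.2 i
      simp only [Finsupp.coe_tsub, Finsupp.coe_add, Finsupp.coe_smul, Pi.sub_apply, Pi.add_apply,
        Pi.smul_apply, smul_eq_mul] at hd h2
      have h5 : p ^ e * b i + m₀.1 i ≡ m.1 i [MOD p ^ e] := ((Nat.modEq_iff_dvd' h2).2 hd).symm
      have h6 : m₀.1 i ≡ m.1 i [MOD p ^ e] := by
        refine Nat.ModEq.trans ?_ h5
        simp [Nat.ModEq]
      rw [Nat.ModEq, Nat.mod_eq_of_lt h3, Nat.mod_eq_of_lt h4] at h6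
      exact hi h6.symm
    · rfl
  · exact fun h => absurd hm₀ h

theorem field_indep (p e : ℕ) [Fact p.Prime] (k : Type*) [Field k] [CharP k p] {ι : Type*}
    (L : Type*) [Field L] [Algebra k L] [CharP L p] (x : ι → L) (hx : AlgebraicIndependent k x)
    (T : Finset {m : ι →₀ ℕ // ∀ i, m i < p ^ e})
    (f : {m : ι →₀ ℕ // ∀ i, m i < p ^ e} → L)
    (hf : ∀ m, f m ∈ IntermediateField.adjoin k (Set.range x))
    (h : ∑ m ∈ T, f m ^ p ^ e * aeval x (monomial m.1 (1 : k)) = 0) : ∀ m ∈ T, f m = 0 := by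
  classical
  have h1 : ∀ m, ∃ r s : MvPolynomial ι k, s ≠ 0 ∧ f m = aeval x r / aeval x s := by
    intro m
    obtain ⟨r, s, hrs⟩ := (IntermediateField.mem_adjoin_range_iff k x _).1 (hf m)
    by_cases hs : s = 0
    · exact ⟨0, 1, one_ne_zero, by rw [hrs, hs]; simp⟩
    · exact ⟨r, s, hs, hrs⟩
  choose r s hs hrs using h1
  have hs' : ∀ m, aeval x (s m) ≠ 0 := fun m h0 => hs m ((map_eq_zero_iff _ hx).1 h0)
  let g : {m : ι →₀ ℕ // ∀ i, m i < p ^ e} → MvPolynomial ι k := fun m => r m * ∏ n ∈ T.erase m, s n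
  have hg : ∀ m ∈ T, aeval x (g m) = f m * aeval x (∏ n ∈ T, s n) := by
    intro m hm
    rw [← Finset.mul_prod_erase T s hm, map_mul, map_mul, hrs]
    field_simp [hs' m]
  have h2 := poly_indep p e k T g (by
    apply hx
    rw [map_zero, map_sum]
    calc _ = ∑ m ∈ T, (aeval x (∏ n ∈ T, s n)) ^ p ^ e *
          (f m ^ p ^ e * aeval x (monomial m.1 (1 : k))) := by
          refine Finset.sum_congr rfl fun m hm => ?_
          rw [map_mul, map_pow, hg m hm]; ring
      _ = 0 := by rw [← Finset.mul_sum, h, mul_zero])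
  intro m hm
  have h3 := hg m hm
  rw [h2 m hm, map_zero] at h3
  refine (mul_eq_zero.1 h3.symm).resolve_right ?_
  rw [map_prod]
  exact Finset.prod_ne_zero_iff.2 fun n _ => hs' n

theorem sep_indep (p e : ℕ) [Fact p.Prime] (k : Type*) [Field k] [CharP k p] {ι : Type*}
    (L : Type*) [Field L] [Algebra k L] [CharP L p] (x : ι → L) (hx : AlgebraicIndependent k x)
    [Algebra.IsSeparable (IntermediateField.adjoin k (Set.range x)) L]
    (T : Finset {m : ι →₀ ℕ // ∀ i, m i < p ^ e})
    (f : {m : ι →₀ ℕ // ∀ i, m i < p ^ e} → L)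
    (h : ∑ m ∈ T, f m ^ p ^ e * aeval x (monomial m.1 (1 : k)) = 0) : ∀ m ∈ T, f m = 0 := by
  classical
  let K := IntermediateField.adjoin k (Set.range x)
  have : CharP K p := charP_of_injective_algebraMap (algebraMap k K).injective p
  let b := Module.Basis.ofVectorSpace K L
  have hb := b.linearIndependent.map_pow_expChar_pow_of_isSeparable p e
  have hmon : ∀ m : ι →₀ ℕ, aeval x (monomial m (1 : k)) ∈ K := fun m =>
    IntermediateField.algebra_adjoin_le_adjoin k _ (by
      rw [Algebra.adjoin_range_eq_range_aeval]
      exact ⟨_, rfl⟩)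
  let U : Finset _ := T.biUnion fun m => (b.repr (f m)).support
  have hexp : ∀ m ∈ T, f m = ∑ i ∈ U, (b.repr (f m) i : L) * b i := by
    intro m hm
    conv_lhs => rw [← b.linearCombination_repr (f m)]
    rw [Finsupp.linearCombination_apply, Finsupp.sum_of_support_subset (s := U)]
    · rfl
    · exact Finset.subset_biUnion_of_mem (fun m => (b.repr (f m)).support) hm
    · simp
  have h1 : ∑ i ∈ U, (∑ m ∈ T, (b.repr (f m) i) ^ p ^ e * (⟨_, hmon m.1⟩ : K)) • (b i ^ p ^ e) = 0 := by
    rw [← h]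
    simp only [Algebra.smul_def, map_sum, Finset.sum_mul]
    rw [Finset.sum_comm]
    refine Finset.sum_congr rfl fun m hm => ?_
    conv_rhs => rw [hexp m hm, sum_pow_char_pow, Finset.sum_mul]
    refine Finset.sum_congr rfl fun i _ => ?_
    rw [map_mul, map_pow, mul_pow]
    change (b.repr (f m) i : L) ^ p ^ e * aeval x (monomial m.1 (1 : k)) * _ = _
    ring
  have h2 := linearIndependent_iff'.1 hb U _ h1
  have h3 : ∀ i ∈ U, ∀ m ∈ T, (b.repr (f m) i : L) = 0 := by
    intro i hi
    apply field_indep p e k L x hx T (fun m => (b.repr (f m) i : L)) (fun m => (b.repr (f m) i).2)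
    have := congrArg (algebraMap K L) (h2 i hi)
    rw [map_zero, map_sum] at this
    rw [← this]
    refine Finset.sum_congr rfl fun m _ => ?_
    rw [map_mul, map_pow]; rfl
  intro m hm
  rw [hexp m hm]
  exact Finset.sum_eq_zero fun i hi => by rw [h3 i hi m hm, zero_mul]


open IntermediateField in
theorem exists_sep_basis (p : ℕ) [Fact p.Prime] (k : Type*) [Field k] [CharP k p] [PerfectRing k p]
    (L : Type*) [Field L] [Algebra k L] (V : Set L) (hV : V.Finite)
    (htop : IntermediateField.adjoin k V = ⊤) :
    ∃ s ⊆ V, IsTranscendenceBasis k ((↑) : s → L) ∧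
      Algebra.IsSeparable (IntermediateField.adjoin k s) L := by
  have hp : p.Prime := Fact.out
  have : CharP L p := charP_of_injective_algebraMap (algebraMap k L).injective p
  have H : ∀ s : Finset L, LinearIndepOn k id (s : Set L) →
      LinearIndepOn k (fun x => x ^ p) (s : Set L) := by
    intro s hs
    refine hs.map_of_injective_injective (frobeniusEquiv k p).symm
      (frobenius L p).toAddMonoidHom (by simp) ?_ ?_
    · intro m hm
      exact (map_eq_zero (frobenius L p)).1 hm
    · intro r m
      change frobenius L p _ = r • frobenius L p m
      rw [Algebra.smul_def, map_mul, Algebra.smul_def]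
      congr 1
      rw [frobenius_def, ← map_pow]
      exact congrArg _ (frobeniusEquiv_symm_pow_p k p r)
  have halg : Algebra.IsAlgebraic (Algebra.adjoin k V) L := by
    rw [← isAlgebraic_adjoin_iff_top, htop, Algebra.isAlgebraic_iff_isIntegral]
    exact Algebra.isIntegral_of_surjective topEquiv.surjective
  let 𝒮 : Set (Set L) := {s | s ⊆ V ∧ IsTranscendenceBasis k ((↑) : s → L)}
  have hfin : 𝒮.Finite := hV.finite_subsets.subset fun s hs => hs.1
  have hne : 𝒮.Nonempty := by
    obtain ⟨t, ht⟩ := exists_isTranscendenceBasis_subset (R := k) V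
    exact ⟨t, ht⟩
  obtain ⟨s, hs, Hs⟩ := hfin.exists_maximalFor
    (fun s => (separableClosure (adjoin k s) L).restrictScalars k) 𝒮 hne
  have key : ∀ n ∈ V, n ∈ (separableClosure (adjoin k s) L).restrictScalars k := by
    intro n hnV
    by_contra hn
    have hns : n ∉ s := fun h => hn (le_restrictScalars_separableClosure _ (subset_adjoin _ _ h))
    have ⟨i, hi₁, hi₂⟩ := exists_isTranscendenceBasis_and_isSeparable_of_linearIndepOn_pow'
      p hp (a := id) H s n hs.2 hns
    rw [Set.image_id] at hi₂
    have hmem : (insert n s \ {i}) ∈ 𝒮 :=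
      ⟨fun y hy => by
        rcases hy.1 with rfl | h
        · exact hnV
        · exact hs.1 h, hi₁⟩
    refine not_lt_iff_le_imp_ge.mpr (Hs hmem) (SetLike.lt_iff_le_and_exists.mpr ⟨?_, n, ?_, hn⟩)
    · rw [separableClosure_le_separableClosure_iff, adjoin_le_iff]
      intro x hx
      obtain rfl | ne := eq_or_ne x i
      exacts [hi₂, le_restrictScalars_separableClosure _ (subset_adjoin _ _ ⟨.inr hx, ne⟩)]
    · obtain rfl | ne := eq_or_ne n i
      exacts [hi₂, le_restrictScalars_separableClosure _ (subset_adjoin _ _ ⟨.inl rfl, ne⟩)]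
  refine ⟨s, hs.1, hs.2, ?_⟩
  rw [← separableClosure.eq_top_iff, ← (restrictScalars_injective k).eq_iff,
    restrictScalars_top, eq_top_iff, ← htop, adjoin_le_iff]
  exact key

/-- Separating transcendence basis of the fraction field lying in `R`. -/
theorem exists_sep_basis_ring (p : ℕ) [Fact p.Prime] (k : Type*) [Field k] [CharP k p]
    [PerfectRing k p] (R : Type*) [CommRing R] [IsDomain R] [Algebra k R] [Algebra.FiniteType k R]
    (L : Type*) [Field L] [Algebra R L] [IsFractionRing R L] [Algebra k L] [IsScalarTower k R L] :
    ∃ (s : Set L) (x : s → R), (∀ i, algebraMap R L (x i) = i) ∧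
      AlgebraicIndependent k x ∧
      Algebra.IsSeparable (IntermediateField.adjoin k (Set.range fun i => algebraMap R L (x i))) L ∧
      Algebra.IsAlgebraic (Algebra.adjoin k (Set.range x)) R := by
  obtain ⟨t, ht⟩ := (inferInstance : Algebra.FiniteType k R).1
  have hinj : Function.Injective (algebraMap R L) := IsFractionRing.injective R L
  obtain ⟨s, hsV, hs1, hs2⟩ := exists_sep_basis p k L (algebraMap R L '' t)
    (t.finite_toSet.image _) (by
      rw [eq_top_iff]
      intro y _
      obtain ⟨a, b, -, rfl⟩ := IsFractionRing.div_surjective (A := R) y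
      have h : ∀ r : R, algebraMap R L r ∈ IntermediateField.adjoin k (algebraMap R L '' t) := by
        intro r
        apply IntermediateField.algebra_adjoin_le_adjoin
        change _ ∈ Algebra.adjoin k (IsScalarTower.toAlgHom k R L '' t)
        rw [← AlgHom.map_adjoin, ht]
        exact ⟨r, trivial, rfl⟩
      exact div_mem (h a) (h b))
  have hx : ∀ i : s, ∃ r : R, algebraMap R L r = i := fun i => by
    obtain ⟨r, -, hr⟩ := hsV i.2
    exact ⟨r, hr⟩
  choose x hx using hx
  have hfun : (fun i => algebraMap R L (x i)) = ((↑) : s → L) := funext hx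
  have hai : AlgebraicIndependent k x := by
    apply AlgebraicIndependent.of_comp (IsScalarTower.toAlgHom k R L)
    convert hs1.1
    exact hfun
  refine ⟨s, x, hx, hai, ?_, ?_⟩
  · rw [hfun, Subtype.range_coe]; exact hs2
  · have hb : IsTranscendenceBasis k x := by
      apply IsTranscendenceBasis.of_comp (IsScalarTower.toAlgHom k R L) hinj
      convert hs1
      exact hfun
    exact hb.isAlgebraic


theorem exists_multiple (k : Type*) [Field k]
    (R : Type*) [CommRing R] [Algebra k R] (E : Type*) [Field E] [Algebra k E]
    [IsDomain (R ⊗[k] E)] {ι : Type*} (x : ι → R) (hx : AlgebraicIndependent k x)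
    (halg : Algebra.IsAlgebraic (Algebra.adjoin k (Set.range x)) R)
    (d : R ⊗[k] E) (hd : d ≠ 0) :
    ∃ D : MvPolynomial ι E, D ≠ 0 ∧
      d ∣ eval₂ (Algebra.TensorProduct.includeRight : E →ₐ[k] R ⊗[k] E).toRingHom
        (fun i => x i ⊗ₜ[k] (1 : E)) D := by
  let g : MvPolynomial ι E →+* R ⊗[k] E :=
    eval₂Hom (Algebra.TensorProduct.includeRight : E →ₐ[k] R ⊗[k] E).toRingHom
        (fun i => x i ⊗ₜ[k] (1 : E))
  let _ := g.toAlgebra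
  have hg : ∀ D, algebraMap (MvPolynomial ι E) (R ⊗[k] E) D = g D := fun _ => rfl
  have h0 : ∀ q : MvPolynomial ι k, g (MvPolynomial.map (algebraMap k E) q) =
      (Algebra.TensorProduct.includeLeft : R →ₐ[k] R ⊗[k] E) (aeval x q) := by
    intro q
    induction q using MvPolynomial.induction_on with
    | C c =>
      simp only [g, map_C, coe_eval₂Hom, eval₂_C, algHom_C]
      rw [AlgHom.commutes]
      exact AlgHom.commutes _ c
    | add a b ha hb => simp only [map_add, ha, hb]
    | mul_X a i ha =>
      rw [map_mul, map_mul, ha, map_mul, map_mul]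
      simp [g]
  have h1 : ∀ r : R, IsAlgebraic (MvPolynomial ι E) (r ⊗ₜ[k] (1 : E)) := by
    intro r
    let f : Algebra.adjoin k (Set.range x) →+* MvPolynomial ι E :=
      (MvPolynomial.map (algebraMap k E)).comp (hx.aevalEquiv.symm : _ →+* MvPolynomial ι k)
    have := IsAlgebraic.ringHom_of_comp_eq f
      (Algebra.TensorProduct.includeLeft : R →ₐ[k] R ⊗[k] E).toRingHom (halg.1 r)
      (by
        intro a b hab
        exact hx.aevalEquiv.symm.injective
          (MvPolynomial.map_injective _ (algebraMap k E).injective hab))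
      (by
        ext a
        obtain ⟨q, rfl⟩ := hx.aevalEquiv.surjective a
        have e1 : f (hx.aevalEquiv q) = MvPolynomial.map (algebraMap k E) q := by
          simp [f]
        have e2 : algebraMap (Algebra.adjoin k (Set.range x)) R (hx.aevalEquiv q) = aeval x q := by
          simp
        rw [RingHom.comp_apply, RingHom.comp_apply]
        erw [e1, e2]
        exact h0 q)
    exact this
  have h2 : ∀ s : R ⊗[k] E, IsAlgebraic (MvPolynomial ι E) s := by
    intro s
    induction s using TensorProduct.induction_on with
    | zero => exact isAlgebraic_zero
    | add a b ha hb => exact ha.add hb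
    | tmul r y =>
      have : r ⊗ₜ[k] y = r ⊗ₜ[k] (1 : E) * algebraMap (MvPolynomial ι E) (R ⊗[k] E) (C y) := by
        simp [hg, g]
      rw [this]
      exact (h1 r).mul (isAlgebraic_algebraMap _)
  exact (h2 d).exists_nonzero_dvd (mem_nonZeroDivisors_of_ne_zero hd)

theorem PLin.comp {p e e' : ℕ} {S : Type*} [CommRing S] {φ ψ : S →+ S}
    (hφ : PLin p e φ) (hψ : PLin p e' ψ) : PLin p (e + e') (ψ.comp φ) := by
  intro r x
  rw [AddMonoidHom.comp_apply, AddMonoidHom.comp_apply, pow_add, mul_comm (p ^ e), pow_mul, hφ, hψ]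

theorem exists_functional_one (p e : ℕ) [Fact p.Prime] (F : Type*) [Field F] [CharP F p]
    (a : F) (ha : a ≠ 0) : ∃ θ : F →+ F, PLin p e θ ∧ θ a = 1 := by
  obtain ⟨θ, h1, h2⟩ := exists_functional p e F (J := Unit) (fun _ => a) (by
    intro T f h j hj
    obtain rfl : T = {()} := by
      ext i; simpa using hj
    simp only [Finset.sum_singleton] at h
    exact (pow_eq_zero_iff (pow_ne_zero e (Fact.out : p.Prime).ne_zero)).1
      ((mul_eq_zero.1 h).resolve_right ha)) ()
  exact ⟨θ, h1, by simpa using h2 ()⟩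

/-- A nonzero polynomial in a separating transcendence basis can be sent to `c ⊗ 1`. -/
theorem poly_good (p : ℕ) [Fact p.Prime] (k : Type*) [Field k] [CharP k p] [PerfectRing k p]
    (R : Type*) [CommRing R] [IsDomain R] [Algebra k R] [Algebra.FiniteType k R] [CharP R p]
    (E : Type*) [Field E] [CharP E p] [Algebra k E] [Nontrivial (R ⊗[k] E)]
    (L : Type*) [Field L] [Algebra R L] [IsFractionRing R L] [Algebra k L] [IsScalarTower k R L]
    {ι : Type*} (x : ι → R) (hx : AlgebraicIndependent k x)
    (hsep : Algebra.IsSeparable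
      (IntermediateField.adjoin k (Set.range fun i => algebraMap R L (x i))) L)
    (D : MvPolynomial ι E) (hD : D ≠ 0) :
    ∃ (e : ℕ) (φ : R ⊗[k] E →+ R ⊗[k] E) (c : R), PLin p e φ ∧ c ≠ 0 ∧
      φ (eval₂ (Algebra.TensorProduct.includeRight : E →ₐ[k] R ⊗[k] E).toRingHom
        (fun i => x i ⊗ₜ[k] (1 : E)) D) = c ⊗ₜ 1 := by
  classical
  have hp : p.Prime := Fact.out
  have hinj : Function.Injective (algebraMap R L) := IsFractionRing.injective R L
  have : CharP L p := charP_of_injective_algebraMap (algebraMap k L).injective p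
  obtain ⟨e, he⟩ : ∃ e : ℕ, ∀ m ∈ D.support, ∀ i, m i < p ^ e := by
    refine ⟨D.totalDegree, fun m hm i => ?_⟩
    calc m i ≤ m.degree := Finsupp.le_degree i m
      _ ≤ D.totalDegree := MvPolynomial.le_totalDegree hm
      _ < p ^ D.totalDegree := Nat.lt_pow_self hp.one_lt
  obtain ⟨m₀, hm₀⟩ := MvPolynomial.support_nonempty.2 hD
  obtain ⟨θL, hθL, hθL'⟩ := exists_functional p e L
    (fun m : {m : ι →₀ ℕ // ∀ i, m i < p ^ e} =>
      aeval (fun i => algebraMap R L (x i)) (monomial m.1 (1 : k)))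
    (fun T f h => sep_indep p e k L (fun i => algebraMap R L (x i)) ((AlgHom.algebraicIndependent_iff
      (IsScalarTower.toAlgHom k R L) hinj).2 hx) T f h) ⟨m₀, he m₀ hm₀⟩
  obtain ⟨c, hc, u, hu, hu'⟩ := clear_denoms p e k R L θL hθL
  obtain ⟨θ, hθ, hθ'⟩ := exists_functional_one p e E (coeff m₀ D) (mem_support_iff.1 hm₀)
  obtain ⟨φ, hφ, hφ'⟩ := tensor_plin p e k R E u θ hu hθ
  refine ⟨e, φ, c, hφ, hc, ?_⟩
  have hum : ∀ m ∈ D.support, u (aeval x (monomial m (1 : k))) = if m = m₀ then c else 0 := by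
    intro m hm
    apply hinj
    rw [hu']
    have h1 := hθL' ⟨m, he m hm⟩
    have h2 : algebraMap R L (aeval x (monomial m (1 : k))) =
        aeval (fun i => algebraMap R L (x i)) (monomial m (1 : k)) := by
      simp [aeval_monomial, Finsupp.prod]
    rw [h2]
    simp only [Subtype.mk.injEq] at h1
    rw [h1]
    split_ifs <;> simp
  have hDe : eval₂ (Algebra.TensorProduct.includeRight : E →ₐ[k] R ⊗[k] E).toRingHom
        (fun i => x i ⊗ₜ[k] (1 : E)) D =
      ∑ m ∈ D.support, aeval x (monomial m (1 : k)) ⊗ₜ[k] coeff m D := by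
    rw [eval₂_eq]
    refine Finset.sum_congr rfl fun m _ => ?_
    have : ∏ i ∈ m.support, (x i ⊗ₜ[k] (1 : E)) ^ m i =
        (∏ i ∈ m.support, x i ^ m i) ⊗ₜ[k] (1 : E) := by
      change ∏ i ∈ m.support,
        ((Algebra.TensorProduct.includeLeft : R →ₐ[k] R ⊗[k] E) (x i)) ^ m i =
        (Algebra.TensorProduct.includeLeft : R →ₐ[k] R ⊗[k] E) _
      rw [map_prod]; simp only [map_pow]
    rw [this]
    simp [aeval_monomial, Finsupp.prod]
  rw [hDe, map_sum, Finset.sum_eq_single m₀]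
  · rw [hφ', hum m₀ hm₀, hθ', if_pos rfl]
  · intro m hm hne
    rw [hφ', hum m hm, if_neg hne, TensorProduct.zero_tmul]
  · exact fun h => absurd hm₀ h

end SFRaux

theorem base_change_to_F_finite_field_strongly_F_regular
    (p : ℕ) [Fact p.Prime]
    (k : Type*) [Field k] [CharP k p] [PerfectRing k p]
    (R : Type*) [CommRing R] [IsDomain R] [Algebra k R] [Algebra.FiniteType k R]
    (hR : StronglyFRegular p R)
    (E : Type*) [Field E] [CharP E p] [Algebra k E] (hE : FFinite p E)
    [IsDomain (TensorProduct k R E)] :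
    StronglyFRegular p (TensorProduct k R E) := by
  have hk : CharP R p := charP_of_injective_algebraMap (algebraMap k R).injective p
  intro d hd
  have hd0 : d ≠ 0 := by
    refine fun h => hd ⊥ ?_ (by simpa using h)
    rw [IsDomain.minimalPrimes_eq_singleton_bot]; rfl
  obtain ⟨s, x, -, hx, hsep, halg⟩ := SFRaux.exists_sep_basis_ring p k R (FractionRing R)
  obtain ⟨D, hD, a, ha⟩ := SFRaux.exists_multiple k R E x hx halg d hd0
  obtain ⟨e, φ, c, hφ, hc, hφc⟩ := SFRaux.poly_good p k R E (FractionRing R) x hx hsep D hD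
  obtain ⟨e', u, hu, huc⟩ := hR c (by
    rw [IsDomain.minimalPrimes_eq_singleton_bot]
    rintro P rfl
    simpa using hc)
  obtain ⟨θ, hθ, hθ'⟩ := SFRaux.exists_functional_one p e' E 1 one_ne_zero
  obtain ⟨ψ, hψ, hψ'⟩ := SFRaux.tensor_plin p e' k R E u θ hu hθ
  refine ⟨e + e', (ψ.comp φ).comp (AddMonoidHom.mulLeft a), ?_, ?_⟩
  · intro r y
    have := hφ.comp hψ r (a * y)
    simp only [AddMonoidHom.comp_apply, AddMonoidHom.coe_mulLeft] at this ⊢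
    rw [← this]
    congr 2; ring
  · simp only [AddMonoidHom.comp_apply, AddMonoidHom.coe_mulLeft]
    rw [mul_comm a d, ← ha, hφc, hψ', huc, hθ']
    rfl
end
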